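/- Let X be a compact Hausdorff space and (M, B, μ) a probability measure space with X ⊆ M. Suppose that to each f ∈ C(X) is assigned a bounded B-measurable function R_f : M → ℝ such that: R_f restricted to X equals f; R_1 is the constant function 1; R_{f+g} = R_f + R_g and R_{rf} = r·R_f for all f, g ∈ C(X) and r ∈ ℝ; R_{f×g} = R_f × R_g (pointwise product); and R_{max(f,g)} = max(R_f, R_g). Suppose moreover that B is the σ-algebra generated by the sets {x ∈ M : R_f(x) > 0}, f ∈ C(X). Then X has full outer measure in M (μ*(X) = 1), the subspace measure μ_X on X is a regular Baire probability measure satisfying ∫_X f dμ_X = ∫_M R_f dμ for every f ∈ C(X), and there exists a Radon probability measure ν on X with ∫ f dν = ∫_M R_f dμ for every f ∈ C(X). -/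

import Mathlib

open BoundedContinuousFunction MeasureTheory Filter Topology

noncomputable section


theorem aux_pi {M : Type*} {X : Type*} [TopologicalSpace X] [CompactSpace X] [T2Space X]
    (R : C(X, ℝ) → M → ℝ)
    (hone : R 1 = fun _ => 1)
    (hadd : ∀ f g, R (f + g) = R f + R g)
    (hsmul : ∀ (r : ℝ) (f), R (r • f) = r • R f)
    (hmul : ∀ f g, R (f * g) = R f * R g) (m : M) :
    ∃ x : X, ∀ f, R f m = f x := by
  let L : C(X, ℝ) →ₗ[ℝ] ℝ :=
    { toFun := fun f => R f m
      map_add' := fun f g => by simp [hadd]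
      map_smul' := fun r f => by simp [hsmul] }
  let φ : C(X, ℝ) →ₐ[ℝ] ℝ := AlgHom.ofLinearMap L
    (by change R 1 m = 1; rw [hone]) (fun f g => by change R _ m = R _ m * R _ m; simp [hmul])
  obtain ⟨x, hx⟩ := (WeakDual.CharacterSpace.continuousMapEval_bijective X ℝ).2
    (WeakDual.CharacterSpace.equivAlgHom.symm φ)
  refine ⟨x, fun f => ?_⟩
  have := DFunLike.congr_fun hx f
  exact this.symm

theorem aux_riesz {M : Type*} [m0 : MeasurableSpace M] (μ : Measure M) [IsProbabilityMeasure μ]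
    {X : Type*} [TopologicalSpace X] [CompactSpace X] [T2Space X]
    [MeasurableSpace X] [BorelSpace X] (p : M → X)
    (hp : ∀ f : C(X, ℝ), Measurable fun m => f (p m)) :
    ∃ ρ : Measure X, IsProbabilityMeasure ρ ∧ ρ.Regular ∧
        ∀ f : C(X, ℝ), ∫ x, f x ∂ρ = ∫ m, f (p m) ∂μ := by
  have hint : ∀ f : C(X, ℝ), Integrable (fun m => f (p m)) μ := fun f =>
    Integrable.of_bound (hp f).aestronglyMeasurable ‖f‖ (ae_of_all _ fun m => f.norm_coe_le_norm _)
  let L : CompactlySupportedContinuousMap X ℝ →ₗ[ℝ] ℝ :=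
    { toFun := fun f => ∫ m, f (p m) ∂μ
      map_add' := fun f g => by
        simpa using integral_add (hint f.toContinuousMap) (hint g.toContinuousMap)
      map_smul' := fun r f => by simp [integral_const_mul] }
  let Λ := PositiveLinearMap.mk₀ L (fun f hf => integral_nonneg fun m =>
    CompactlySupportedContinuousMap.le_def.1 hf (p m))
  have key : ∀ f : C(X, ℝ), ∫ x, f x ∂(RealRMK.rieszMeasure Λ) = ∫ m, f (p m) ∂μ := fun f =>
    RealRMK.integral_rieszMeasure Λ (CompactlySupportedContinuousMap.continuousMapEquiv f)
  refine ⟨RealRMK.rieszMeasure Λ, ⟨?_⟩, inferInstance, key⟩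
  have h1 := key 1
  simp only [ContinuousMap.one_apply, integral_const, smul_eq_mul, mul_one, probReal_univ] at h1
  rw [measureReal_def] at h1
  exact (ENNReal.toReal_eq_one_iff _).1 h1

/-- Proposition 3.8: if `X` is a compact Hausdorff space sitting inside a probability
measure space `M` (via `ι`) whose σ-algebra is generated by the sets `{R f > 0}`, and the
`R f` form a representation of `C(X)` by bounded measurable functions, then `X` has full
outer measure, the subspace measure is a (inner regular) Baire probability measure
integrating `f` to `∫ R f dμ`, and there is a Radon probability measure on `X` with the
same integrals. -/
theorem full_outer_measure_and_radon_extension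
    {M : Type*} [m0 : MeasurableSpace M] (μ : Measure M) [IsProbabilityMeasure μ]
    {X : Type*} [TopologicalSpace X] [CompactSpace X] [T2Space X]
    (ι : X → M) (hι : Function.Injective ι)
    (R : C(X, ℝ) → M → ℝ)
    (hmeas : ∀ f, Measurable (R f))
    (hbd : ∀ f, ∃ C, ∀ m, |R f m| ≤ C)
    (hrestrict : ∀ f x, R f (ι x) = f x)
    (hone : R 1 = fun _ => 1)
    (hadd : ∀ f g, R (f + g) = R f + R g)
    (hsmul : ∀ (r : ℝ) (f), R (r • f) = r • R f)
    (hmul : ∀ f g, R (f * g) = R f * R g)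
    (hmax : ∀ f g, R (f ⊔ g) = fun m => max (R f m) (R g m))
    (hgen : m0 = MeasurableSpace.generateFrom {A | ∃ f : C(X, ℝ), A = {m | 0 < R f m}}) :
    μ (Set.range ι) = 1 ∧
    (letI : MeasurableSpace X := m0.comap ι
      ∃ ν : Measure X,
        (∀ A : Set X, MeasurableSet A → ν A = μ (ι '' A)) ∧
        IsProbabilityMeasure ν ∧ ν.InnerRegular ∧
        ∀ f : C(X, ℝ), ∫ x, f x ∂ν = ∫ m, R f m ∂μ) ∧
    (letI : MeasurableSpace X := borel X
      ∃ ρ : Measure X, IsProbabilityMeasure ρ ∧ ρ.Regular ∧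
        ∀ f : C(X, ℝ), ∫ x, f x ∂ρ = ∫ m, R f m ∂μ) := by
  choose p hp using aux_pi R hone hadd hsmul hmul
  have hbor : @BorelSpace X _ (borel X) := @BorelSpace.mk _ _ (borel X) rfl
  obtain ⟨ρ, hρ1, hρ2, hρ3⟩ := @aux_riesz M m0 μ _ X _ _ _ (borel X) hbor p
    (fun f => by
      have : (fun m => f (p m)) = R f := by ext m; rw [hp]
      rw [this]; exact hmeas f)
  have hρ4 : ∀ f : C(X, ℝ), ∫ x, f x ∂ρ = ∫ m, R f m ∂μ := fun f => by
    rw [hρ3]; simp only [hp]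
  have hιm : @Measurable X M (borel X) m0 ι := by
    rw [hgen]
    refine @measurable_generateFrom X M (borel X) _ _ ?_
    rintro _ ⟨f, rfl⟩
    simp only [Set.preimage_ofPred_eq, hrestrict]
    exact @IsOpen.measurableSet X _ _ (borel X) _ (isOpen_lt continuous_const f.continuous)
  have hmap : μ = @Measure.map X M (borel X) m0 ι ρ := by
    have hpr : IsProbabilityMeasure (@Measure.map X M (borel X) m0 ι ρ) :=
      @Measure.isProbabilityMeasure_map X M (borel X) m0 ρ _ ι hιm.aemeasurable
    refine ext_of_generate_finite _ hgen ?_ ?_ (by simp)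
    · rintro _ ⟨f, rfl⟩ _ ⟨g, rfl⟩ -
      refine ⟨f ⊓ g, ?_⟩
      ext m
      simp [hp]
    · rintro _ ⟨f, rfl⟩
      have hfm : @Measurable X ℝ (borel X) _ f := @Continuous.measurable _ _ _ (borel X) _ _ _ _ _ f.continuous
      have hlaw : μ.map (R f) = @Measure.map X ℝ (borel X) _ f ρ := by
        have h1 : IsProbabilityMeasure (@Measure.map X ℝ (borel X) _ f ρ) :=
          @Measure.isProbabilityMeasure_map X ℝ (borel X) _ ρ _ f hfm.aemeasurable
        have h2 : IsProbabilityMeasure (μ.map (R f)) :=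
          Measure.isProbabilityMeasure_map (hmeas f).aemeasurable
        refine ext_of_forall_integral_eq_of_IsFiniteMeasure fun g => ?_
        rw [integral_map (hmeas f).aemeasurable g.continuous.measurable.aestronglyMeasurable,
          integral_map hfm.aemeasurable
            g.continuous.measurable.aestronglyMeasurable]
        have := hρ4 (g.toContinuousMap.comp f)
        simp only [hp] at this ⊢
        exact this.symm
      have e1 := Measure.map_apply (μ := μ) (hmeas f) (measurableSet_Ioi (a := (0:ℝ)))
      have e2 := @Measure.map_apply _ _ (borel X) _ ρ _ hfm _ (measurableSet_Ioi (a := (0:ℝ)))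
      have e3 := @Measure.map_apply _ _ (borel X) m0 ρ _ hιm {m | 0 < R f m}
        (measurableSet_lt measurable_const (hmeas f))
      rw [e3]
      simp only [Set.preimage_ofPred_eq, hrestrict]
      rw [hlaw, e2] at e1
      exact e1.symm
  have hS : ∀ S : Set M, MeasurableSet S → μ S = ρ (ι ⁻¹' S) := fun S hS => by
    conv_lhs => rw [hmap]
    exact @Measure.map_apply _ _ (borel X) m0 ρ _ hιm S hS
  have hle : m0.comap ι ≤ borel X := by
    rintro _ ⟨S, hS, rfl⟩
    exact hιm hS
  have hA : ∀ A : Set X, MeasurableSet[m0.comap ι] A → ρ A = μ (ι '' A) := by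
    rintro _ ⟨S, hSm, rfl⟩
    apply le_antisymm
    · rw [← measure_toMeasurable (μ := μ) (ι '' (ι ⁻¹' S)), hS _ (measurableSet_toMeasurable _ _)]
      refine measure_mono ?_
      rw [← Set.image_subset_iff]
      exact subset_toMeasurable _ _
    · rw [← hS S hSm]
      exact measure_mono (Set.image_preimage_subset _ _)
  refine ⟨?_, ?_, ρ, hρ1, hρ2, hρ4⟩
  · rw [← Set.image_univ, ← hA _ (@MeasurableSet.univ _ (m0.comap ι))]
    exact hρ1.measure_univ
  · refine ⟨ρ.trim hle, fun A h => ?_, ?_, ?_, fun f => ?_⟩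
    · rw [trim_measurableSet_eq hle h, hA A h]
    · refine @IsProbabilityMeasure.mk _ (m0.comap ι) _ ?_
      rw [trim_measurableSet_eq hle (@MeasurableSet.univ _ (m0.comap ι))]
      exact hρ1.measure_univ
    · refine @Measure.InnerRegular.mk _ (m0.comap ι) _ _ ?_
      intro A h r hr
      rw [trim_measurableSet_eq hle h] at hr
      have hlt : ρ A ≠ ⊤ := measure_ne_top _ _
      obtain ⟨K, hKA, hK, hrK⟩ := @MeasurableSet.exists_lt_isCompact_of_ne_top X (borel X) ρ _ _ A (hle _ h) hlt r hr
      exact ⟨K, hKA, hK, hrK.trans_le (le_trim hle)⟩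
    · rw [← hρ4 f]
      refine (integral_trim hle ?_).symm
      refine Measurable.stronglyMeasurable ?_
      have : (f : X → ℝ) = R f ∘ ι := by ext x; simp [hrestrict]
      rw [this]
      exact (hmeas f).comp (comap_measurable ι)
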